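/- Let (X,d) be a metric space and let ε > 0 be such that the kernel (x,y) ↦ exp(ε·d(x,y)) is of hyperbolic type on X. Then X is 3-coarsely strongly-ε-hyperbolic: for all x₁,x₂,x₃,x₄ ∈ X, writing d_{ij} = d(xᵢ,xⱼ) and M = max_{1≤i,j≤4} d_{ij}, one has exp((ε/2)(d₁₃+d₂₄)) ≤ exp((ε/2)(d₁₂+d₃₄)) + exp((ε/2)(d₁₄+d₂₃)) + 3·exp((ε/2)·M). -/

import Mathlib

/-- A kernel of hyperbolic type on a set `X`: symmetric, nonnegative, with diagonal `1`,
satisfying the hyperbolic Cauchy–Schwarz inequalities. -/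
def IsHypKernel {X : Type*} (K : X → X → ℝ) : Prop :=
  (∀ x y, K x y = K y x) ∧ (∀ x y, 0 ≤ K x y) ∧ (∀ x, K x x = 1) ∧
  ∀ (n : ℕ) (x₀ : X) (x : Fin n → X) (lam : Fin n → ℝ),
    (∑ i, ∑ j, lam i * lam j * K (x i) (x j)) ≤ (∑ k, lam k * K x₀ (x k)) ^ 2

/-!
A kernel `K` of hyperbolic type is a Gram kernel of unit timelike vectors in Lorentzian signature,
and `K - 1` is one of null vectors: append the same spacelike unit coordinate to all of them. The
reverse Cauchy–Schwarz inequality, applied to a positive combination of the first and third null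
vectors and one of the second and fourth, becomes Ptolemy's inequality for `√(K - 1)` once the
weights are balanced. Replacing `√(K - 1)` by `√K` on the left costs at most `max √K₁₃ √K₂₄`.
-/

lemma reverse_cauchy_schwarz_of_nonpos_on_ker {k V : Type*} [Field k] [LinearOrder k]
    [IsStrictOrderedRing k] [AddCommGroup V] [Module k V] {B : LinearMap.BilinForm k V}
    (hB : B.IsSymm) (φ : V →ₗ[k] k) (hφ : ∀ u, φ u = 0 → B u u ≤ 0)
    {v : V} (hv : 0 ≤ B v v) (w : V) : B v v * B w w ≤ B v w ^ 2 := by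
  by_cases hv0 : φ v = 0
  · rw [(hφ v hv0).antisymm hv, zero_mul]
    positivity
  · set t := φ w / φ v
    have hker : φ (w - t • v) = 0 := by
      simp only [map_sub, map_smul, smul_eq_mul, t, div_mul_cancel₀ _ hv0, sub_self]
    have hnonpos : B w w - 2 * t * B v w + t ^ 2 * B v v ≤ 0 := by
      calc B w w - 2 * t * B v w + t ^ 2 * B v v = B (w - t • v) (w - t • v) := by
            simp only [map_sub, map_smul, LinearMap.sub_apply, LinearMap.smul_apply, smul_eq_mul,
              hB.eq w v]
            ring
        _ ≤ 0 := hφ _ hker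
    linarith [mul_nonpos_of_nonneg_of_nonpos hv hnonpos, sq_nonneg (t * B v v - B v w)]

lemma sqrt_mul_sqrt_le_add_max (p q : ℝ) :
    √p * √q ≤ √(p - 1) * √(q - 1) + max √p √q := by
  wlog hpq : p ≤ q generalizing p q
  · simpa only [mul_comm, max_comm] using this q p (le_of_not_ge hpq)
  suffices √p * √q ≤ √(p - 1) * √(q - 1) + √q from
    this.trans (add_le_add_right (le_max_right _ _) _)
  rcases le_total p 1 with hp | hp
  · have : √p * √q ≤ √q := mul_le_of_le_one_left (by positivity) (Real.sqrt_le_one.2 hp)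
    linarith [mul_nonneg (Real.sqrt_nonneg (p - 1)) (Real.sqrt_nonneg (q - 1))]
  · have hq : 1 ≤ q := hp.trans hpq
    have hcross : p - 1 ≤ √(p - 1) * √(q - 1) * √q :=
      calc p - 1 = √(p - 1) * √(p - 1) * 1 := by
            rw [mul_one, Real.mul_self_sqrt (sub_nonneg.2 hp)]
        _ ≤ √(p - 1) * √(q - 1) * √q := by
            gcongr
            exact Real.one_le_sqrt.2 hq
    refine (sq_le_sq₀ (by positivity) (by positivity)).1 ?_
    calc (√p * √q) ^ 2 = p * q := by
          rw [mul_pow, Real.sq_sqrt (by linarith), Real.sq_sqrt (by linarith)]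
      _ ≤ (p - 1) * (q - 1) + 2 * (√(p - 1) * √(q - 1) * √q) + q := by linarith
      _ = (√(p - 1) * √(q - 1) + √q) ^ 2 := by
          rw [add_sq, mul_pow, Real.sq_sqrt (by linarith), Real.sq_sqrt (by linarith),
            Real.sq_sqrt (by linarith)]
          ring

namespace IsHypKernel

variable {X : Type*} {K : X → X → ℝ}

lemma one_le (hK : IsHypKernel K) (x y : X) : 1 ≤ K x y := by
  obtain ⟨-, hnonneg, hdiag, hCS⟩ := hK
  have h : 1 ≤ K x y ^ 2 := by simpa [hdiag] using hCS 1 x ![y] ![1]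
  exact (one_le_sq_iff₀ (hnonneg x y)).1 h

lemma sum_mul_sub_one_nonpos (hK : IsHypKernel K) {n : ℕ} (x₀ : X) (x : Fin n → X)
    (c : Fin n → ℝ) (hc : ∑ k, c k * K x₀ (x k) = 0) :
    ∑ i, ∑ j, c i * c j * (K (x i) (x j) - 1) ≤ 0 := by
  obtain ⟨-, -, -, hCS⟩ := hK
  calc ∑ i, ∑ j, c i * c j * (K (x i) (x j) - 1)
      = ∑ i, ∑ j, c i * c j * K (x i) (x j) - (∑ i, c i) ^ 2 := by
        simp only [mul_sub, mul_one, Finset.sum_sub_distrib, sq, Finset.sum_mul_sum]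
    _ ≤ ∑ i, ∑ j, c i * c j * K (x i) (x j) := sub_le_self _ (sq_nonneg _)
    _ ≤ 0 := by simpa only [hc, zero_pow two_ne_zero] using hCS n x₀ x c

lemma reverse_cauchy_schwarz_sub_one (hK : IsHypKernel K) {n : ℕ} (x : Fin n → X)
    {v : Fin n → ℝ} (hv : 0 ≤ ∑ i, ∑ j, v i * (K (x i) (x j) - 1) * v j)
    (w : Fin n → ℝ) :
    (∑ i, ∑ j, v i * (K (x i) (x j) - 1) * v j) * (∑ i, ∑ j, w i * (K (x i) (x j) - 1) * w j) ≤
      (∑ i, ∑ j, v i * (K (x i) (x j) - 1) * w j) ^ 2 := by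
  rcases n with _ | n
  · simp
  let B := Matrix.toBilin' (Matrix.of fun i j => K (x i) (x j) - 1)
  have hsymm : B.IsSymm := ⟨fun v w => by
    simp only [B, Matrix.toBilin'_apply, Matrix.of_apply]
    rw [Finset.sum_comm]
    refine Finset.sum_congr rfl fun i _ => Finset.sum_congr rfl fun j _ => ?_
    rw [hK.1 (x j) (x i)]
    ring⟩
  let φ : (Fin (n + 1) → ℝ) →ₗ[ℝ] ℝ := Fintype.linearCombination ℝ fun i => K (x 0) (x i)
  have hφ : ∀ u, φ u = 0 → B u u ≤ 0 := fun u hu => by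
    simpa only [B, Matrix.toBilin'_apply, Matrix.of_apply, mul_right_comm] using
      hK.sum_mul_sub_one_nonpos (x 0) x u hu
  have h := reverse_cauchy_schwarz_of_nonpos_on_ker hsymm φ hφ (v := v)
  simp only [B, Matrix.toBilin'_apply, Matrix.of_apply] at h
  exact h hv w

lemma four_mul_sub_one_mul_sub_one_le_sq (hK : IsHypKernel K) (x₁ x₂ x₃ x₄ : X) {α β : ℝ}
    (hαβ : 0 ≤ α * β) (γ δ : ℝ) :
    4 * (α * β * (γ * δ)) * ((K x₁ x₃ - 1) * (K x₂ x₄ - 1)) ≤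
      (α * γ * (K x₁ x₂ - 1) + α * δ * (K x₁ x₄ - 1) + β * γ * (K x₂ x₃ - 1) +
        β * δ * (K x₃ x₄ - 1)) ^ 2 := by
  have h13 : 0 ≤ α * β * (K x₁ x₃ - 1) := mul_nonneg hαβ (sub_nonneg.2 (hK.one_le _ _))
  have h := hK.reverse_cauchy_schwarz_sub_one ![x₁, x₂, x₃, x₄] (v := ![α, 0, β, 0])
    (w := ![0, γ, 0, δ])
  obtain ⟨hsymm, -, hdiag, -⟩ := hK
  simp only [Fin.sum_univ_four, Matrix.cons_val, hdiag, hsymm x₃ x₁, hsymm x₄ x₂,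
    hsymm x₃ x₂] at h
  linarith [h (by linarith)]

lemma sqrt_sub_one_mul_le_of_le_sq (hK : IsHypKernel K) {x₁ x₂ x₃ x₄ : X} {a b c d : ℝ}
    (ha : 0 < a) (hb : 0 < b) (hc : 0 < c) (hd : 0 < d)
    (h12 : K x₁ x₂ - 1 ≤ a ^ 2) (h34 : K x₃ x₄ - 1 ≤ b ^ 2)
    (h14 : K x₁ x₄ - 1 ≤ c ^ 2) (h23 : K x₂ x₃ - 1 ≤ d ^ 2) :
    √(K x₁ x₃ - 1) * √(K x₂ x₄ - 1) ≤ a * b + c * d := by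
  have hL (x y : X) : 0 ≤ K x y - 1 := sub_nonneg.2 (hK.one_le x y)
  -- These weights make all four mixed terms multiples of `a * b` or `c * d`.
  have h := hK.four_mul_sub_one_mul_sub_one_le_sq x₁ x₂ x₃ x₄ (α := d * b) (β := a * c)
    (by positivity) (c * b) (a * d)
  have hsq : (2 * (a * b * c * d)) ^ 2 * ((K x₁ x₃ - 1) * (K x₂ x₄ - 1)) ≤
      (2 * (a * b * c * d)) ^ 2 * (a * b + c * d) ^ 2 :=
    calc (2 * (a * b * c * d)) ^ 2 * ((K x₁ x₃ - 1) * (K x₂ x₄ - 1))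
        ≤ (d * b * (c * b) * (K x₁ x₂ - 1) + d * b * (a * d) * (K x₁ x₄ - 1) +
            a * c * (c * b) * (K x₂ x₃ - 1) + a * c * (a * d) * (K x₃ x₄ - 1)) ^ 2 := by
          linarith
      _ ≤ (d * b * (c * b) * a ^ 2 + d * b * (a * d) * c ^ 2 +
            a * c * (c * b) * d ^ 2 + a * c * (a * d) * b ^ 2) ^ 2 := by
          have := hL x₁ x₂; have := hL x₁ x₄; have := hL x₂ x₃; have := hL x₃ x₄
          gcongr
      _ = (2 * (a * b * c * d)) ^ 2 * (a * b + c * d) ^ 2 := by ring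
  rw [← Real.sqrt_mul (hL x₁ x₃)]
  exact Real.sqrt_le_iff.2 ⟨by positivity, le_of_mul_le_mul_left hsq (by positivity)⟩

theorem ptolemy_sqrt_sub_one (hK : IsHypKernel K) (x₁ x₂ x₃ x₄ : X) :
    √(K x₁ x₃ - 1) * √(K x₂ x₄ - 1) ≤
      √(K x₁ x₂ - 1) * √(K x₃ x₄ - 1) + √(K x₁ x₄ - 1) * √(K x₂ x₃ - 1) := by
  have hsq {η : ℝ} (hη : 0 < η) (x y : X) : K x y - 1 ≤ (√(K x y - 1) + η) ^ 2 :=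
    (Real.sqrt_le_left (by positivity)).1 (le_add_of_nonneg_right hη.le)
  -- The weights degenerate when one of the four sides has `K = 1`, so perturb them.
  have hperturbed : ∀ η : ℝ, 0 < η → √(K x₁ x₃ - 1) * √(K x₂ x₄ - 1) ≤
      (√(K x₁ x₂ - 1) + η) * (√(K x₃ x₄ - 1) + η) +
        (√(K x₁ x₄ - 1) + η) * (√(K x₂ x₃ - 1) + η) := fun η hη =>
    hK.sqrt_sub_one_mul_le_of_le_sq (by positivity) (by positivity) (by positivity)
      (by positivity) (hsq hη _ _) (hsq hη _ _) (hsq hη _ _) (hsq hη _ _)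
  have hlim : Filter.Tendsto (fun η : ℝ => (√(K x₁ x₂ - 1) + η) * (√(K x₃ x₄ - 1) + η) +
      (√(K x₁ x₄ - 1) + η) * (√(K x₂ x₃ - 1) + η)) (nhds 0)
      (nhds (√(K x₁ x₂ - 1) * √(K x₃ x₄ - 1) + √(K x₁ x₄ - 1) * √(K x₂ x₃ - 1))) :=
    Continuous.tendsto' (by fun_prop) _ _ (by simp only [add_zero])
  exact ge_of_tendsto (x := nhdsWithin 0 (Set.Ioi 0)) (hlim.mono_left nhdsWithin_le_nhds)
    (eventually_nhdsWithin_of_forall hperturbed)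

end IsHypKernel

theorem coarselyStronglyHyperbolic_of_exp_isHypKernel_general {X : Type*} {K : X → X → ℝ}
    (hK : IsHypKernel K) (x₁ x₂ x₃ x₄ : X) :
    √(K x₁ x₃) * √(K x₂ x₄) ≤
      √(K x₁ x₂) * √(K x₃ x₄) + √(K x₁ x₄) * √(K x₂ x₃) + max √(K x₁ x₃) √(K x₂ x₄) := by
  calc √(K x₁ x₃) * √(K x₂ x₄)
      ≤ √(K x₁ x₃ - 1) * √(K x₂ x₄ - 1) + max √(K x₁ x₃) √(K x₂ x₄) :=
        sqrt_mul_sqrt_le_add_max _ _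
    _ ≤ √(K x₁ x₂ - 1) * √(K x₃ x₄ - 1) + √(K x₁ x₄ - 1) * √(K x₂ x₃ - 1) +
          max √(K x₁ x₃) √(K x₂ x₄) := by
        gcongr
        exact hK.ptolemy_sqrt_sub_one x₁ x₂ x₃ x₄
    _ ≤ √(K x₁ x₂) * √(K x₃ x₄) + √(K x₁ x₄) * √(K x₂ x₃) + max √(K x₁ x₃) √(K x₂ x₄) := by
        gcongr <;> exact sub_le_self _ zero_le_one

/-- If `exp (ε d)` is a kernel of hyperbolic type on a metric space `(X,d)` then `X` is
`3`-coarsely strongly-`ε`-hyperbolic: for all `x₁, x₂, x₃, x₄`,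
`exp((ε/2)(d₁₃+d₂₄)) ≤ exp((ε/2)(d₁₂+d₃₄)) + exp((ε/2)(d₁₄+d₂₃)) + 3·exp((ε/2)M)`,
where `M` is the maximum of the pairwise distances. -/
theorem coarselyStronglyHyperbolic_of_exp_isHypKernel {X : Type*} [MetricSpace X]
    (ε : ℝ) (hε : 0 < ε)
    (hK : IsHypKernel fun x y : X => Real.exp (ε * dist x y)) :
    ∀ x₁ x₂ x₃ x₄ : X,
      Real.exp ((ε / 2) * (dist x₁ x₃ + dist x₂ x₄)) ≤
        Real.exp ((ε / 2) * (dist x₁ x₂ + dist x₃ x₄)) +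
        Real.exp ((ε / 2) * (dist x₁ x₄ + dist x₂ x₃)) +
        3 * Real.exp ((ε / 2) *
          (max (max (max (dist x₁ x₂) (dist x₁ x₃)) (max (dist x₁ x₄) (dist x₂ x₃)))
            (max (dist x₂ x₄) (dist x₃ x₄)))) := by
  intro x₁ x₂ x₃ x₄
  have h := coarselyStronglyHyperbolic_of_exp_isHypKernel_general hK x₁ x₂ x₃ x₄
  simp only [← Real.exp_half, mul_div_right_comm, ← Real.exp_add, ← mul_add] at h
  refine h.trans (add_le_add_right ((max_le ?_ ?_).trans
    (le_mul_of_one_le_left (Real.exp_nonneg _) (by norm_num))) _) <;> gcongr <;> simp
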